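/- arXiv:1507.08920 — 4 statements merged into one kernel-verified Lean document; each statement's English description precedes it below -/
import Mathlib

section
/- Let N ≥ 1, let n_0,…,n_{N−1} be positive integers, and let σ > 0, T^col > 0 and T_i^succ > 0 (0 ≤ i ≤ N−1) be real constants. For η ∈ ℝ^N define X(η) = σ/T^col + Σ_{i=0}^{N−1} n_i (T_i^succ/T^col − 1) e^{η_i} + Π_{i=0}^{N−1} (1 + e^{η_i})^{n_i} − 1. Then the function U_1(η) = Σ_{i=0}^{N−1} n_i (η_i − log X(η)) is concave on ℝ^N. -/
/-- A nonnegative function that is convex on the logarithmic scale; zeros are allowed. -/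
def LogConvex {E : Type*} [AddCommGroup E] [Module ℝ E] (f : E → ℝ) : Prop :=
  (∀ x, 0 ≤ f x) ∧ ∀ x y (a b : ℝ), 0 < a → 0 < b → a + b = 1 →
    f (a • x + b • y) ≤ f x ^ a * f y ^ b

/-- Two-term Hölder inequality with weights `a + b = 1`. -/
theorem rpow_mul_rpow_add_le {u v w z a b : ℝ} (hu : 0 ≤ u) (hv : 0 ≤ v) (hw : 0 ≤ w)
    (hz : 0 ≤ z) (ha : 0 < a) (hb : 0 < b) (hab : a + b = 1) :
    u ^ a * v ^ b + w ^ a * z ^ b ≤ (u + w) ^ a * (v + z) ^ b := by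
  have hpq : (a⁻¹).HolderConjugate b⁻¹ := Real.HolderConjugate.inv_inv ha hb hab
  have h := Real.inner_le_Lp_mul_Lq_of_nonneg Finset.univ hpq
    (f := ![u ^ a, w ^ a]) (g := ![v ^ b, z ^ b])
    (by intro i _; fin_cases i <;> simp <;> positivity)
    (by intro i _; fin_cases i <;> simp <;> positivity)
  simpa [Fin.sum_univ_two, Real.rpow_rpow_inv, hu, hv, hw, hz, ha.ne', hb.ne'] using h

namespace LogConvex

variable {E : Type*} [AddCommGroup E] [Module ℝ E] {f g : E → ℝ}

theorem add (hf : LogConvex f) (hg : LogConvex g) : LogConvex fun x => f x + g x := by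
  refine ⟨fun x => add_nonneg (hf.1 x) (hg.1 x), fun x y a b ha hb hab => ?_⟩
  exact (add_le_add (hf.2 x y a b ha hb hab) (hg.2 x y a b ha hb hab)).trans
    (rpow_mul_rpow_add_le (hf.1 x) (hf.1 y) (hg.1 x) (hg.1 y) ha hb hab)

theorem mul (hf : LogConvex f) (hg : LogConvex g) : LogConvex fun x => f x * g x := by
  refine ⟨fun x => mul_nonneg (hf.1 x) (hg.1 x), fun x y a b ha hb hab => ?_⟩
  refine (mul_le_mul (hf.2 x y a b ha hb hab) (hg.2 x y a b ha hb hab) (hg.1 _)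
    (mul_nonneg (Real.rpow_nonneg (hf.1 x) a) (Real.rpow_nonneg (hf.1 y) b))).trans_eq ?_
  simp only [Real.mul_rpow (hf.1 _) (hg.1 _)]
  ring

theorem const {c : ℝ} (hc : 0 ≤ c) : LogConvex fun _ : E => c := by
  refine ⟨fun _ => hc, fun x y a b ha hb hab => ?_⟩
  rw [← Real.rpow_add_of_nonneg hc ha.le hb.le, hab, Real.rpow_one]

theorem exp_linear (l : E →ₗ[ℝ] ℝ) : LogConvex fun x => Real.exp (l x) := by
  refine ⟨fun _ => (Real.exp_pos _).le, fun x y a b ha hb hab => ?_⟩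
  rw [← Real.exp_mul, ← Real.exp_mul, ← Real.exp_add]
  simp [mul_comm]

theorem sum {ι : Type*} (s : Finset ι) {F : ι → E → ℝ} (hF : ∀ i, LogConvex (F i)) :
    LogConvex fun x => ∑ i ∈ s, F i x := by
  classical
  induction s using Finset.induction_on with
  | empty => simpa using const (E := E) le_rfl
  | insert j s hj ih =>
    simp only [Finset.sum_insert hj]
    exact (hF j).add ih

/-- The terms of degree at least two in the expansion of `∏ (1 + F i)` form a log-convex
function. -/
theorem prod_one_add_sub {ι : Type*} (s : Finset ι) {F : ι → E → ℝ}
    (hF : ∀ i, LogConvex (F i)) :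
    LogConvex fun x => ∏ i ∈ s, (1 + F i x) - 1 - ∑ i ∈ s, F i x := by
  classical
  induction s using Finset.induction_on with
  | empty => simpa using const (E := E) le_rfl
  | insert j s hj ih =>
    convert ih.add ((hF j).mul ((sum s hF).add ih)) using 2
    rw [Finset.sum_insert hj, Finset.prod_insert hj]
    ring

theorem log_le (hf : LogConvex f) (hpos : ∀ x, 0 < f x) {x y : E} {a b : ℝ} (ha : 0 < a)
    (hb : 0 < b) (hab : a + b = 1) :
    Real.log (f (a • x + b • y)) ≤ a * Real.log (f x) + b * Real.log (f y) := by
  have hx := hpos x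
  have hy := hpos y
  rw [← Real.log_rpow hx, ← Real.log_rpow hy, ← Real.log_mul (by positivity) (by positivity)]
  exact Real.log_le_log (hpos _) (hf.2 x y a b ha hb hab)

end LogConvex

/-- Lemma 1 of the paper. Let `N ≥ 1`, `n_0, …, n_{N-1}` positive integers,
and `σ > 0`, `T^col > 0`, `T_i^succ > 0` real constants. With
`X(η) = σ/T^col + Σ_i n_i (T_i^succ/T^col − 1) e^{η_i} + Π_i (1 + e^{η_i})^{n_i} − 1`,
the function `U₁(η) = Σ_i n_i (η_i − log X(η))` is concave on `ℝ^N`. -/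
theorem U1_concave (N : ℕ) (hN : 1 ≤ N) (n : Fin N → ℕ) (hn : ∀ i, 0 < n i)
    (σ Tcol : ℝ) (Ts : Fin N → ℝ) (hσ : 0 < σ) (hTcol : 0 < Tcol) (hTs : ∀ i, 0 < Ts i)
    (X U1 : (Fin N → ℝ) → ℝ)
    (hX : ∀ η, X η = σ / Tcol + ∑ i, (n i : ℝ) * (Ts i / Tcol - 1) * Real.exp (η i)
        + ∏ i, (1 + Real.exp (η i)) ^ (n i) - 1)
    (hU1 : ∀ η, U1 η = ∑ i, (n i : ℝ) * (η i - Real.log (X η))) :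
    ConcaveOn ℝ Set.univ U1 := by
  have hexp (i : Fin N) : LogConvex fun η : Fin N → ℝ => Real.exp (η i) :=
    LogConvex.exp_linear (LinearMap.proj i : (Fin N → ℝ) →ₗ[ℝ] ℝ)
  have hcoef (i : Fin N) : 0 ≤ (n i : ℝ) * (Ts i / Tcol) := by
    have := hTs i
    positivity
  have hrest := LogConvex.prod_one_add_sub Finset.univ
    (F := fun (p : Σ i, Fin (n i)) (η : Fin N → ℝ) => Real.exp (η p.1)) fun p => hexp p.1
  have hlin := LogConvex.sum Finset.univ fun i =>
    (LogConvex.const (E := Fin N → ℝ) (hcoef i)).mul (hexp i)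
  have hsplit (η : Fin N → ℝ) : X η = σ / Tcol +
      (∑ i, (n i : ℝ) * (Ts i / Tcol) * Real.exp (η i) +
        (∏ p : Σ i, Fin (n i), (1 + Real.exp (η p.1)) - 1
          - ∑ p : Σ i, Fin (n i), Real.exp (η p.1))) := by
    simp only [hX, Fintype.prod_sigma, Fintype.sum_sigma, Finset.prod_const, Finset.sum_const,
      Finset.card_univ, Fintype.card_fin, nsmul_eq_mul, mul_sub, sub_mul, mul_one,
      Finset.sum_sub_distrib]
    ring
  have hconst : 0 < σ / Tcol := by positivity
  have hXconv : LogConvex X := by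
    rw [funext hsplit]
    exact (LogConvex.const hconst.le).add (hlin.add hrest)
  have hXpos (η : Fin N → ℝ) : 0 < X η := by
    rw [hsplit]
    exact add_pos_of_pos_of_nonneg hconst ((hlin.add hrest).1 η)
  rw [concaveOn_iff_forall_pos]
  refine ⟨convex_univ, fun x _ y _ a b ha hb hab => ?_⟩
  have hlog := hXconv.log_le hXpos (x := x) (y := y) ha hb hab
  simp only [hU1, smul_eq_mul, Finset.mul_sum, ← Finset.sum_add_distrib]
  refine Finset.sum_le_sum fun i _ => ?_
  simp only [Pi.add_apply, Pi.smul_apply, smul_eq_mul]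
  linarith [mul_le_mul_of_nonneg_left hlog (Nat.cast_nonneg (α := ℝ) (n i))]
end

section
/- Let N ≥ 1, let n_0,…,n_{N−1} be positive integers, and let σ > 0, T^col > 0 and T_i^succ > 0 (0 ≤ i ≤ N−1) be real constants. Then the function η ↦ log( σ/T^col + Σ_{i=0}^{N−1} n_i (T_i^succ/T^col − 1) e^{η_i} + Π_{i=0}^{N−1} (1 + e^{η_i})^{n_i} − 1 ) is convex on ℝ^N. -/
/-- Two-term weighted Hölder inequality. -/
lemma Real.rpow_mul_rpow_add_le {p q r s a b : ℝ} (hp : 0 ≤ p) (hq : 0 ≤ q) (hr : 0 ≤ r)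
    (hs : 0 ≤ s) (ha : 0 < a) (hb : 0 < b) (hab : a + b = 1) :
    p ^ a * q ^ b + r ^ a * s ^ b ≤ (p + r) ^ a * (q + s) ^ b := by
  rcases (add_nonneg hp hr).eq_or_lt with h | hpr
  · obtain rfl : p = 0 := by linarith
    obtain rfl : r = 0 := by linarith
    simp [Real.zero_rpow ha.ne']
  rcases (add_nonneg hq hs).eq_or_lt with h | hqs
  · obtain rfl : q = 0 := by linarith
    obtain rfl : s = 0 := by linarith
    simp [Real.zero_rpow hb.ne']
  have h₁ := Real.geom_mean_le_arith_mean2_weighted ha.le hb.le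
    (div_nonneg hp hpr.le) (div_nonneg hq hqs.le) hab
  have h₂ := Real.geom_mean_le_arith_mean2_weighted ha.le hb.le
    (div_nonneg hr hpr.le) (div_nonneg hs hqs.le) hab
  have key : a * (p / (p + r)) + b * (q / (q + s)) + (a * (r / (p + r)) + b * (s / (q + s)))
      = 1 := by
    rw [← hab]
    field_simp
    ring
  have h := (add_le_add h₁ h₂).trans_eq key
  rw [Real.div_rpow hp hpr.le, Real.div_rpow hq hqs.le, Real.div_rpow hr hpr.le,
    Real.div_rpow hs hqs.le, div_mul_div_comm, div_mul_div_comm, ← add_div,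
    div_le_one (by positivity)] at h
  exact h

/-- The nonnegative log-convex functions on a real vector space form a subsemiring. -/
def logConvexSubsemiring (V : Type*) [AddCommGroup V] [Module ℝ V] : Subsemiring (V → ℝ) where
  carrier := {f | (∀ x, 0 ≤ f x) ∧ ∀ x y : V, ∀ a b : ℝ, 0 < a → 0 < b → a + b = 1 →
    f (a • x + b • y) ≤ f x ^ a * f y ^ b}
  zero_mem' := ⟨fun _ => le_rfl, fun x y a b ha _ _ => by simp [Real.zero_rpow ha.ne']⟩
  one_mem' := ⟨fun _ => zero_le_one, fun x y a b _ _ _ => by simp⟩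
  add_mem' := by
    rintro f g ⟨hf, hf'⟩ ⟨hg, hg'⟩
    exact ⟨fun x => add_nonneg (hf x) (hg x), fun x y a b ha hb hab =>
      (add_le_add (hf' x y a b ha hb hab) (hg' x y a b ha hb hab)).trans
        (Real.rpow_mul_rpow_add_le (hf x) (hf y) (hg x) (hg y) ha hb hab)⟩
  mul_mem' := by
    rintro f g ⟨hf, hf'⟩ ⟨hg, hg'⟩
    refine ⟨fun x => mul_nonneg (hf x) (hg x), fun x y a b ha hb hab => ?_⟩
    simp only [Pi.mul_apply]
    rw [Real.mul_rpow (hf x) (hg x), Real.mul_rpow (hf y) (hg y), mul_mul_mul_comm]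
    exact mul_le_mul (hf' x y a b ha hb hab) (hg' x y a b ha hb hab) (hg _)
      (mul_nonneg (Real.rpow_nonneg (hf x) a) (Real.rpow_nonneg (hf y) b))

section

variable {V : Type*} [AddCommGroup V] [Module ℝ V]

lemma const_mem_logConvexSubsemiring {c : ℝ} (hc : 0 ≤ c) :
    (fun _ : V => c) ∈ logConvexSubsemiring V := by
  refine ⟨fun _ => hc, fun x y a b ha hb hab => ?_⟩
  rw [← Real.rpow_add_of_nonneg hc ha.le hb.le, hab, Real.rpow_one]

lemma exp_linear_mem_logConvexSubsemiring (l : V →ₗ[ℝ] ℝ) :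
    (fun x => Real.exp (l x)) ∈ logConvexSubsemiring V := by
  refine ⟨fun x => (Real.exp_pos _).le, fun x y a b _ _ _ => le_of_eq ?_⟩
  beta_reduce
  rw [← Real.exp_mul, ← Real.exp_mul, ← Real.exp_add, map_add, map_smul, map_smul,
    smul_eq_mul, smul_eq_mul, mul_comm a, mul_comm b]

lemma convexOn_log_of_mem_logConvexSubsemiring {f : V → ℝ} (hf : f ∈ logConvexSubsemiring V)
    (hpos : ∀ x, 0 < f x) : ConvexOn ℝ Set.univ (fun x => Real.log (f x)) := by
  refine convexOn_iff_forall_pos.2 ⟨convex_univ, fun x _ y _ a b ha hb hab => ?_⟩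
  refine (Real.log_le_log (hpos _) (hf.2 x y a b ha hb hab)).trans_eq ?_
  rw [Real.log_mul (Real.rpow_pos_of_pos (hpos x) a).ne' (Real.rpow_pos_of_pos (hpos y) b).ne',
    Real.log_rpow (hpos x), Real.log_rpow (hpos y), smul_eq_mul, smul_eq_mul]

end

/-- Expanding `(1 + e) ^ n`, the terms of degree at least two stay in any subsemiring
containing `e`. -/
lemma Subsemiring.exists_one_add_pow_eq {R : Type*} [CommSemiring R] (S : Subsemiring R)
    {e : R} (he : e ∈ S) (n : ℕ) : ∃ r ∈ S, (1 + e) ^ n = 1 + n * e + r := by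
  induction n with
  | zero => exact ⟨0, S.zero_mem, by simp⟩
  | succ n ih =>
    obtain ⟨r, hr, h⟩ := ih
    refine ⟨r + n * e * e + r * e, ?_, ?_⟩
    · exact S.add_mem (S.add_mem hr (S.mul_mem (S.mul_mem (natCast_mem S n) he) he))
        (S.mul_mem hr he)
    · rw [pow_succ, h]
      push_cast
      ring

/-- Expanding `∏ (1 + e i) ^ n i`, the terms of degree at least two stay in any subsemiring
containing every `e i`. -/
lemma Subsemiring.exists_prod_one_add_pow_eq {R ι : Type*} [CommSemiring R] (S : Subsemiring R)
    {e : ι → R} (he : ∀ i, e i ∈ S) (n : ι → ℕ) (s : Finset ι) :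
    ∃ r ∈ S, ∏ i ∈ s, (1 + e i) ^ n i = 1 + ∑ i ∈ s, n i * e i + r := by
  classical
  induction s using Finset.induction_on with
  | empty => exact ⟨0, S.zero_mem, by simp⟩
  | insert j s hj ih =>
    obtain ⟨r, hr, h⟩ := ih
    obtain ⟨r', hr', h'⟩ := S.exists_one_add_pow_eq (he j) (n j)
    have hlin : ∀ i, (n i : R) * e i ∈ S := fun i => S.mul_mem (natCast_mem S _) (he i)
    refine ⟨r + r' + (n j * e j + r') * (∑ i ∈ s, n i * e i + r), ?_, ?_⟩
    · exact S.add_mem (S.add_mem hr hr') (S.mul_mem (S.add_mem (hlin j) hr')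
        (S.add_mem (S.sum_mem fun i _ => hlin i) hr))
    · rw [Finset.prod_insert hj, Finset.sum_insert hj, h, h']
      ring

/-- Let `N ≥ 1`, `n_0, …, n_{N-1}` positive integers, and `σ > 0`,
`T^col > 0`, `T_i^succ > 0` real constants. Then
`η ↦ log( σ/T^col + Σ_i n_i (T_i^succ/T^col − 1) e^{η_i} + Π_i (1 + e^{η_i})^{n_i} − 1 )`
is convex on `ℝ^N`. -/
theorem logX_convex (N : ℕ) (hN : 1 ≤ N) (n : Fin N → ℕ) (hn : ∀ i, 0 < n i)
    (σ Tcol : ℝ) (Ts : Fin N → ℝ) (hσ : 0 < σ) (hTcol : 0 < Tcol) (hTs : ∀ i, 0 < Ts i) :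
    ConvexOn ℝ Set.univ (fun η : Fin N → ℝ =>
      Real.log (σ / Tcol + ∑ i, (n i : ℝ) * (Ts i / Tcol - 1) * Real.exp (η i)
        + ∏ i, (1 + Real.exp (η i)) ^ (n i) - 1)) := by
  let e : Fin N → (Fin N → ℝ) → ℝ := fun i η => Real.exp (η i)
  have he : ∀ i, e i ∈ logConvexSubsemiring (Fin N → ℝ) := fun i =>
    exp_linear_mem_logConvexSubsemiring (LinearMap.proj i : (Fin N → ℝ) →ₗ[ℝ] ℝ)
  obtain ⟨r, hr, hprod⟩ :=
    (logConvexSubsemiring (Fin N → ℝ)).exists_prod_one_add_pow_eq he n Finset.univ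
  have hg : (∑ i, (fun _ : Fin N → ℝ => (n i : ℝ) * (Ts i / Tcol)) * e i) + r
      ∈ logConvexSubsemiring (Fin N → ℝ) :=
    add_mem (sum_mem fun i _ => mul_mem (const_mem_logConvexSubsemiring
      (mul_nonneg (Nat.cast_nonneg _) (div_pos (hTs i) hTcol).le)) (he i)) hr
  have hc : 0 < σ / Tcol := div_pos hσ hTcol
  have h := convexOn_log_of_mem_logConvexSubsemiring
    (add_mem (const_mem_logConvexSubsemiring hc.le) hg)
    (fun η => add_pos_of_pos_of_nonneg hc (hg.1 η))
  refine h.congr fun η _ => congrArg Real.log ?_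
  have hη := congrFun hprod η
  simp only [Finset.prod_apply, Finset.sum_apply, Pi.add_apply, Pi.mul_apply, Pi.pow_apply,
    Pi.one_apply, Pi.natCast_apply, e] at hη ⊢
  rw [hη]
  simp only [mul_sub, sub_mul, mul_one, Finset.sum_sub_distrib]
  ring
end

section
/- Let N ≥ 1, let n_0,…,n_{N−1} be positive integers, let σ > 0, T^col > 0, T_i^succ > 0 be real, and let τ_i ∈ (0,1) for 0 ≤ i ≤ N−1; set α_i = τ_i/(1−τ_i). Define P^idle = Π_{i} (1−τ_i)^{n_i}, P_i^succ = τ_i (1−τ_i)^{n_i−1} Π_{j≠i} (1−τ_j)^{n_j}, P^succ = Σ_i n_i P_i^succ, P_i^col = 1 − (1−τ_i)^{n_i−1} Π_{j≠i}(1−τ_j)^{n_j}, and X = σ/T^col + Σ_i n_i (T_i^succ/T^col − 1) α_i + Π_i (1+α_i)^{n_i} − 1. Then the flow total air-time T_i^air = ( P_i^succ T_i^succ + τ_i P_i^col T^col ) / ( P^idle σ + Σ_j n_j P_j^succ T_j^succ + (1 − P^idle − P^succ) T^col ) satisfies T_i^air = (1/X) · ( α_i (T_i^succ/T^col − 1)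 + τ_i / P^idle ). -/
/-- With `N ≥ 1` ACs, `n_i ≥ 1` stations per AC, `σ, T^col, T_i^succ > 0`,
attempt probabilities `τ_i ∈ (0,1)` and `α_i = τ_i/(1−τ_i)`, defining `P^idle`, `P_i^succ`,
`P^succ`, `P_i^col` and `X` as in the paper, the flow total air-time
`T_i^air = (P_i^succ T_i^succ + τ_i P_i^col T^col) /
  (P^idle σ + Σ_j n_j P_j^succ T_j^succ + (1 − P^idle − P^succ) T^col)`
satisfies `T_i^air = (1/X) (α_i (T_i^succ/T^col − 1) + τ_i / P^idle)`. -/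
theorem flow_airtime_alpha_form (N : ℕ) (hN : 1 ≤ N) (n : Fin N → ℕ) (hn : ∀ i, 0 < n i)
    (σ Tcol : ℝ) (Ts τ α : Fin N → ℝ)
    (hσ : 0 < σ) (hTcol : 0 < Tcol) (hTs : ∀ i, 0 < Ts i)
    (hτ : ∀ i, τ i ∈ Set.Ioo (0 : ℝ) 1)
    (hα : ∀ i, α i = τ i / (1 - τ i))
    (Pidle Psucc X : ℝ) (Psucci Picol Tair : Fin N → ℝ)
    (hPidle : Pidle = ∏ i, (1 - τ i) ^ (n i))
    (hPsucci : ∀ i, Psucci i = τ i * (1 - τ i) ^ (n i - 1)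
        * ∏ j ∈ Finset.univ.erase i, (1 - τ j) ^ (n j))
    (hPsucc : Psucc = ∑ i, (n i : ℝ) * Psucci i)
    (hPicol : ∀ i, Picol i = 1 - (1 - τ i) ^ (n i - 1)
        * ∏ j ∈ Finset.univ.erase i, (1 - τ j) ^ (n j))
    (hX : X = σ / Tcol + ∑ i, (n i : ℝ) * (Ts i / Tcol - 1) * α i
        + ∏ i, (1 + α i) ^ (n i) - 1)
    (hTair : ∀ i, Tair i = (Psucci i * Ts i + τ i * Picol i * Tcol)
        / (Pidle * σ + ∑ j, (n j : ℝ) * Psucci j * Ts j + (1 - Pidle - Psucc) * Tcol)) :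
    ∀ i, Tair i = (1 / X) * (α i * (Ts i / Tcol - 1) + τ i / Pidle) := by
  have hpos : ∀ j, 0 < 1 - τ j := fun j => sub_pos.2 (hτ j).2
  have hP : 0 < Pidle := hPidle ▸ Finset.prod_pos fun j _ => pow_pos (hpos j) _
  have hidle : ∀ j, (1 - τ j) * ((1 - τ j) ^ (n j - 1)
      * ∏ k ∈ Finset.univ.erase j, (1 - τ k) ^ (n k)) = Pidle := fun j => by
    rw [← mul_assoc, mul_pow_sub_one (hn j).ne', hPidle]
    exact Finset.mul_prod_erase Finset.univ (fun k => (1 - τ k) ^ n k) (Finset.mem_univ j)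
  have hsucc : ∀ j, Psucci j = Pidle * α j := fun j => by
    have := (hpos j).ne'
    rw [hPsucci, hα, ← hidle j]
    field_simp
  have hcol : ∀ j, τ j * Picol j = τ j - Pidle * α j := fun j => by
    rw [← hsucc, hPsucci, hPicol]
    ring
  have hprod : Pidle * ∏ j, (1 + α j) ^ (n j) = 1 := by
    rw [hPidle, ← Finset.prod_mul_distrib]
    refine Finset.prod_eq_one fun j _ => ?_
    have := (hpos j).ne'
    rw [← mul_pow, hα, mul_add, mul_div_cancel₀ _ this]
    simp
  have hsum : ∑ j, (n j : ℝ) * Psucci j * Ts j - Psucc * Tcol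
      = Pidle * Tcol * ∑ j, (n j : ℝ) * (Ts j / Tcol - 1) * α j := by
    rw [hPsucc, Finset.sum_mul, ← Finset.sum_sub_distrib, Finset.mul_sum]
    refine Finset.sum_congr rfl fun j _ => ?_
    rw [hsucc]
    field_simp
  have hden : Pidle * σ + ∑ j, (n j : ℝ) * Psucci j * Ts j + (1 - Pidle - Psucc) * Tcol
      = Pidle * Tcol * X := by
    have hσT : Tcol * (σ / Tcol) = σ := mul_div_cancel₀ _ hTcol.ne'
    rw [hX]
    linear_combination hsum - Tcol * hprod - Pidle * hσT
  intro i
  have hnum : Psucci i * Ts i + τ i * Picol i * Tcol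
      = Pidle * Tcol * (α i * (Ts i / Tcol - 1) + τ i / Pidle) := by
    rw [hcol, hsucc]
    field_simp
    ring
  rw [hTair, hden, hnum, mul_div_mul_left _ _ (mul_pos hP hTcol).ne', one_div_mul_eq_div]
end

section
/- Let N ≥ 1, let n_0,…,n_{N−1} be positive integers, let σ, T^col, T_i^succ (0 ≤ i ≤ N−1) and W_i be real, and let τ_i ∈ (0,1); set α_i = τ_i/(1−τ_i). Fix i and define Y_i = Π_{j≠i} (1+α_j)^{−n_j}, Q_i = Y_i / (1+α_i)^{n_i−1}, P_i^col = 1 − Q_i, Z_i = Σ_{j≠i} (T_j^succ − T^col) n_j α_j, and D_i^bs, D_i^bc as the expected per-slot blocking delays of AC i (D_i^bs = T_i^succ (n_i−1) τ_i (1−τ_i)^{n_i−2} Π_{j≠i}(1−τ_j)^{n_j} + Σ_{j≠i} T_j^succ n_j τ_j (1−τ_j)^{n_j−1} Π_{k≠j,i}(1−τ_k)^{n_k} (1−τ_i)^{n_i−1}; D_i^bc = T^col (1 − Q_i − (n_i−1)τ_i(1−τ_i)^{n_i−2}Π_{j≠i}(1−τ_j)^{n_j} − Σ_{j≠i} n_j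 τ_j (1−τ_j)^{n_j−1} Π_{k≠j,i}(1−τ_k)^{n_k}(1−τ_i)^{n_i−1})). Then the average delay with retry limit M = 0, D_i = σ W_i/2 + (W_i/2)(D_i^bs + D_i^bc) + T^col P_i^col + T_i^succ (1 − P_i^col), satisfies D_i = W_i(σ + T^col)/2 + Q_i (T_i^succ − T^col) + T^col + (W_i Q_i / 2) ( Z_i − T^col + (T_i^succ − T^col)(n_i−1) α_i ). -/
theorem attempt_mul_pow_sub_one {m : ℕ} (hm : 0 < m) {t a : ℝ} (h : t = a * (1 - t)) :
    t * (1 - t) ^ (m - 1) = a * (1 - t) ^ m := by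
  rw [← mul_pow_sub_one hm.ne' (1 - t)]
  linear_combination (1 - t) ^ (m - 1) * h

/-- The factor `m - 1` absorbs the truncated exponent `m - 2` at `m = 1`. -/
theorem sub_one_mul_attempt_mul_pow {m : ℕ} (hm : 0 < m) {t a : ℝ} (h : t = a * (1 - t)) :
    ((m : ℝ) - 1) * t * (1 - t) ^ (m - 2) = ((m : ℝ) - 1) * a * (1 - t) ^ (m - 1) := by
  obtain rfl | hm' := (Nat.succ_le_of_lt hm).eq_or_lt
  · simp
  · rw [mul_assoc, mul_assoc, ← attempt_mul_pow_sub_one (Nat.sub_pos_of_lt hm') h, Nat.sub_sub]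

/-- Equation (4) of the paper. With `N ≥ 1` ACs, `n_i ≥ 1` stations per AC,
reals `σ, T^col, T_i^succ, W_i`, attempt probabilities `τ_i ∈ (0,1)` and `α_i = τ_i/(1−τ_i)`,
fixing `i` and defining `Y_i = Π_{j≠i}(1+α_j)^{−n_j}`, `Q_i = Y_i/(1+α_i)^{n_i−1}`,
`P_i^col = 1 − Q_i`, `Z_i`, and the blocking-delay components `D_i^bs`, `D_i^bc` as in the
paper, the average delay with retry limit `M = 0`,
`D_i = σW_i/2 + (W_i/2)(D_i^bs + D_i^bc) + T^col P_i^col + T_i^succ (1 − P_i^col)`, satisfies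
`D_i = W_i(σ+T^col)/2 + Q_i(T_i^succ−T^col) + T^col
      + (W_i Q_i/2)(Z_i − T^col + (T_i^succ−T^col)(n_i−1)α_i)`. -/
theorem average_delay_closed_form (N : ℕ) (hN : 1 ≤ N) (n : Fin N → ℕ) (hn : ∀ i, 0 < n i)
    (σ Tcol Wi : ℝ) (Ts τ α : Fin N → ℝ)
    (hτ : ∀ j, τ j ∈ Set.Ioo (0 : ℝ) 1)
    (hα : ∀ j, α j = τ j / (1 - τ j))
    (i : Fin N) (Yi Qi Picol Zi Dbs Dbc Di : ℝ)
    (hYi : Yi = ∏ j ∈ Finset.univ.erase i, (1 + α j) ^ (-(n j : ℤ)))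
    (hQi : Qi = Yi / (1 + α i) ^ (n i - 1))
    (hPicol : Picol = 1 - Qi)
    (hZi : Zi = ∑ j ∈ Finset.univ.erase i, (Ts j - Tcol) * (n j : ℝ) * α j)
    (hDbs : Dbs = Ts i * ((n i : ℝ) - 1) * τ i * (1 - τ i) ^ (n i - 2)
          * ∏ j ∈ Finset.univ.erase i, (1 - τ j) ^ (n j)
        + ∑ j ∈ Finset.univ.erase i, Ts j * (n j : ℝ) * τ j * (1 - τ j) ^ (n j - 1)
          * (∏ k ∈ (Finset.univ.erase i).erase j, (1 - τ k) ^ (n k))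
          * (1 - τ i) ^ (n i - 1))
    (hDbc : Dbc = Tcol * (1 - Qi
        - ((n i : ℝ) - 1) * τ i * (1 - τ i) ^ (n i - 2)
          * ∏ j ∈ Finset.univ.erase i, (1 - τ j) ^ (n j)
        - ∑ j ∈ Finset.univ.erase i, (n j : ℝ) * τ j * (1 - τ j) ^ (n j - 1)
          * (∏ k ∈ (Finset.univ.erase i).erase j, (1 - τ k) ^ (n k))
          * (1 - τ i) ^ (n i - 1)))
    (hDi : Di = σ * Wi / 2 + (Wi / 2) * (Dbs + Dbc) + Tcol * Picol + Ts i * (1 - Picol)) :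
    Di = Wi * (σ + Tcol) / 2 + Qi * (Ts i - Tcol) + Tcol
        + (Wi * Qi / 2) * (Zi - Tcol + (Ts i - Tcol) * ((n i : ℝ) - 1) * α i) := by
  have hne : ∀ j, 1 - τ j ≠ 0 := fun j => (sub_pos.2 (hτ j).2).ne'
  have hone : ∀ j, 1 + α j = (1 - τ j)⁻¹ := fun j => by
    refine eq_inv_of_mul_eq_one_left ?_
    rw [hα j, add_mul, div_mul_cancel₀ _ (hne j)]
    ring
  have hY : Yi = ∏ j ∈ Finset.univ.erase i, (1 - τ j) ^ n j := by
    rw [hYi]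
    refine Finset.prod_congr rfl fun j _ => ?_
    rw [hone j, inv_zpow', neg_neg, zpow_natCast]
  have hQ : Qi = Yi * (1 - τ i) ^ (n i - 1) := by
    rw [hQi, hone i, inv_pow, div_inv_eq_mul]
  have hτα : ∀ j, τ j = α j * (1 - τ j) := fun j => by
    rw [hα j, div_mul_cancel₀ _ (hne j)]
  have hown : ((n i : ℝ) - 1) * τ i * (1 - τ i) ^ (n i - 2) * Yi
      = ((n i : ℝ) - 1) * α i * Qi := by
    rw [hQ, sub_one_mul_attempt_mul_pow (hn i) (hτα i)]
    ring
  have hother : ∀ j ∈ Finset.univ.erase i, (n j : ℝ) * τ j * (1 - τ j) ^ (n j - 1)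
      * (∏ k ∈ (Finset.univ.erase i).erase j, (1 - τ k) ^ n k) * (1 - τ i) ^ (n i - 1)
      = (n j : ℝ) * α j * Qi := fun j hj => by
    rw [hQ, hY, ← Finset.mul_prod_erase _ _ hj, mul_assoc (n j : ℝ),
      attempt_mul_pow_sub_one (hn j) (hτα j)]
    ring
  have hsuccSum : ∑ j ∈ Finset.univ.erase i, Ts j * (n j : ℝ) * τ j * (1 - τ j) ^ (n j - 1)
      * (∏ k ∈ (Finset.univ.erase i).erase j, (1 - τ k) ^ n k) * (1 - τ i) ^ (n i - 1)
      = (∑ j ∈ Finset.univ.erase i, Ts j * ((n j : ℝ) * α j)) * Qi := by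
    rw [Finset.sum_mul]
    refine Finset.sum_congr rfl fun j hj => ?_
    linear_combination Ts j * hother j hj
  have hZ : Zi = ∑ j ∈ Finset.univ.erase i, Ts j * ((n j : ℝ) * α j)
      - Tcol * ∑ j ∈ Finset.univ.erase i, (n j : ℝ) * α j := by
    rw [hZi, Finset.mul_sum, ← Finset.sum_sub_distrib]
    exact Finset.sum_congr rfl fun j _ => by ring
  rw [hsuccSum, ← hY] at hDbs
  rw [Finset.sum_congr rfl hother, ← Finset.sum_mul, ← hY, hown] at hDbc
  rw [hDi, hPicol, hDbs, hDbc, hZ]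
  linear_combination Wi / 2 * Ts i * hown
end
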